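/- arXiv:2402.00716 — 4 statements merged into one kernel-verified Lean document; each statement's English description precedes it below -/
import Mathlib

section
/- Let X be a type and deg : X → ℕ a function with deg x ≥ 1 for all x ∈ X, such that for every n the set {x ∈ X : deg x = n} is finite. For n ∈ ℕ, the set of finite multisets s over X with ∑_{x∈s} deg x = n (summed with multiplicity) is finite, and so is the set of finite subsets S ⊆ X with ∑_{x∈S} deg x = n; let m_n and s_n denote their respective cardinalities. Then for every n ∈ ℕ, m_n = ∑_{j : 2j ≤ n} s_{n-2j} · m_j. -/
/-!
Every multiset `s` over `X` can be written uniquely as `s = S + 2 • t` with `S` a finite subset and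
`t` a multiset: `S` consists of the elements of odd multiplicity, and `t` carries the halved
multiplicities (`exists_eq_val_add_two_nsmul`, `val_add_two_nsmul_inj`). Since
`deg s = deg S + 2 * deg t`, sorting the multisets of degree `n` by `j = deg t` gives the
recursion. For finiteness, a multiset of degree `n` has at most `n` elements, all of degree at
most `n`, so it lies below the `n`-fold multiple of the finite set of such elements.
-/

/-- By induction on `s`: when one more copy of `a` is added, either `a` joins
the squarefree part `S`, or it leaves `S` and one copy of it joins the halved part `t`. -/
theorem exists_eq_val_add_two_nsmul {X : Type*} (s : Multiset X) :
    ∃ (S : Finset X) (t : Multiset X), S.val + 2 • t = s := by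
  classical
  induction s using Multiset.induction_on with
  | empty => exact ⟨∅, 0, by simp⟩
  | cons a s ih =>
    obtain ⟨S, t, rfl⟩ := ih
    by_cases ha : a ∈ S
    · refine ⟨S.erase a, a ::ₘ t, ?_⟩
      have h : S.val = a ::ₘ (S.erase a).val := by
        rw [Finset.erase_val, Multiset.cons_erase ha]
      rw [h, two_nsmul, two_nsmul]
      simp only [Multiset.cons_add, Multiset.add_cons]
    · refine ⟨insert a S, t, ?_⟩
      rw [Finset.insert_val_of_notMem ha, Multiset.cons_add]

theorem val_add_two_nsmul_inj {X : Type*} {S S' : Finset X} {t t' : Multiset X}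
    (h : S.val + 2 • t = S'.val + 2 • t') : S = S' ∧ t = t' := by
  classical
  have hc : ∀ x, S.val.count x + 2 * t.count x = S'.val.count x + 2 * t'.count x := fun x => by
    simpa using congrArg (Multiset.count x) h
  have h1 : ∀ x, S.val.count x ≤ 1 := Multiset.nodup_iff_count_le_one.1 S.nodup
  have h2 : ∀ x, S'.val.count x ≤ 1 := Multiset.nodup_iff_count_le_one.1 S'.nodup
  refine ⟨Finset.val_injective (Multiset.ext.2 fun x => ?_), Multiset.ext.2 fun x => ?_⟩
  all_goals
    have := hc x
    have := h1 x
    have := h2 x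
    omega

theorem finite_multiset_degree {X : Type*} (deg : X → ℕ) (hdeg : ∀ x : X, 1 ≤ deg x)
    (hfin : ∀ n : ℕ, {x : X | deg x = n}.Finite) (n : ℕ) :
    {s : Multiset X | (s.map deg).sum = n}.Finite := by
  classical
  have hF : {x : X | deg x ≤ n}.Finite := by
    refine ((Set.finite_Iic n).biUnion fun k _ => hfin k).subset fun x hx => ?_
    simpa using hx
  refine (Set.finite_Iic (n • hF.toFinset.val)).subset fun s hs => ?_
  rw [Set.mem_ofPred_eq] at hs
  rw [Set.mem_Iic, Multiset.le_iff_count]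
  intro x
  by_cases hx : x ∈ s
  · have hxn : deg x ≤ n := hs ▸ Multiset.le_sum_of_mem (Multiset.mem_map_of_mem deg hx)
    have hcard : s.card ≤ n := by
      have := Multiset.card_nsmul_le_sum (s := s.map deg) (a := 1) (by simpa using fun y _ => hdeg y)
      simpa [hs] using this
    have h1 : hF.toFinset.val.count x = 1 :=
      Multiset.count_eq_one_of_mem hF.toFinset.nodup (by simpa using hxn)
    rw [Multiset.count_nsmul, h1, mul_one]
    exact (Multiset.count_le_card x s).trans hcard
  · simp [Multiset.count_eq_zero_of_notMem hx]


/-- Combinatorial form of `∏_x (1+T^{deg x}) = ∏_x (1-T^{2·deg x})/(1-T^{deg x})`: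
if every element of `X` has degree `≥ 1` and there are finitely many elements of each
degree, then the multisets of total degree `n` and the subsets of total degree `n` form
finite sets, and their counts `m_n`, `s_n` satisfy `m_n = ∑_{2j ≤ n} s_{n-2j}·m_j`. -/
theorem squarefree_divisor_count (X : Type*) (deg : X → ℕ)
    (hdeg : ∀ x : X, 1 ≤ deg x)
    (hfin : ∀ n : ℕ, {x : X | deg x = n}.Finite) :
    (∀ n : ℕ, {s : Multiset X | (s.map deg).sum = n}.Finite) ∧
    (∀ n : ℕ, {S : Finset X | ∑ x ∈ S, deg x = n}.Finite) ∧
    (∀ n : ℕ,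
      {s : Multiset X | (s.map deg).sum = n}.ncard =
        ∑ j ∈ Finset.range (n / 2 + 1),
          {S : Finset X | ∑ x ∈ S, deg x = n - 2 * j}.ncard *
            {s : Multiset X | (s.map deg).sum = j}.ncard) := by
  have hM := finite_multiset_degree deg hdeg hfin
  have hS : ∀ n : ℕ, {S : Finset X | ∑ x ∈ S, deg x = n}.Finite := fun n =>
    (hM n).preimage Finset.val_injective.injOn
  refine ⟨hM, hS, fun n => ?_⟩
  have hsum : ∀ (S : Finset X) (t : Multiset X),
      ((S.val + 2 • t).map deg).sum = ∑ x ∈ S, deg x + 2 * (t.map deg).sum := fun S t => by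
    simp [Multiset.map_nsmul, Multiset.sum_nsmul]
  simp only [fun k => Set.ncard_eq_toFinset_card _ (hM k),
    fun k => Set.ncard_eq_toFinset_card _ (hS k), ← Finset.card_product]
  rw [← Finset.card_sigma]
  symm
  refine Finset.card_bij (fun p _ => p.2.1.val + 2 • p.2.2) ?_ ?_ ?_
  · rintro ⟨j, S, t⟩ h
    simp only [Finset.mem_sigma, Finset.mem_range, Finset.mem_product, Set.Finite.mem_toFinset,
      Set.mem_ofPred_eq] at h ⊢
    rw [hsum]
    omega
  · rintro ⟨j, S, t⟩ h ⟨j', S', t'⟩ h' heq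
    simp only [Finset.mem_sigma, Finset.mem_range, Finset.mem_product, Set.Finite.mem_toFinset,
      Set.mem_ofPred_eq] at h h'
    obtain ⟨rfl, rfl⟩ := val_add_two_nsmul_inj heq
    -- The index `j` is determined by `t`, being its degree.
    obtain rfl : j = j' := h.2.2.symm.trans h'.2.2
    rfl
  · intro s hs
    obtain ⟨S, t, rfl⟩ := exists_eq_val_add_two_nsmul s
    simp only [Set.Finite.mem_toFinset, Set.mem_ofPred_eq, hsum] at hs
    refine ⟨⟨(t.map deg).sum, S, t⟩, ?_, rfl⟩
    simp only [Finset.mem_sigma, Finset.mem_range, Finset.mem_product, Set.Finite.mem_toFinset,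
      Set.mem_ofPred_eq, and_true]
    omega
end

section
/- Let F be a finite field with q = #F elements. Then the number of tuples (a₁, a₂, a₃, a₄, a₆) ∈ F⁵ such that the Weierstrass curve y² + a₁xy + a₃y = x³ + a₂x² + a₄x + a₆ has nonzero discriminant Δ equals q⁵ - q⁴. -/
/-!
The complementary count is that exactly `q⁴` Weierstrass equations over `F` are singular
(`Δ = 0`). A singular Weierstrass cubic over a finite field has exactly one singular affine point,
and this point is rational: uniqueness is `IsSingularAt.unique`, existence is
`exists_isSingularAt`. In the existence proof a node is given by a rational formula in the
coefficients, while in characteristics 2 and 3 a cusp may need a `p`-th root, which exists because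
finite fields are perfect.

Conversely, for every choice of `a₁`, `a₂` and of a point `(r, t)`, the vanishing at `(r, t)` of the
equation and of its two partial derivatives determines `a₃`, `a₄`, `a₆` uniquely, and the resulting
curve has `Δ = 0`. Hence `(r, t, a₁, a₂)` parametrizes the singular equations bijectively.
-/

/-- The Weierstrass equation of `W` and both of its partial derivatives
vanish at the affine point `(r, t)`. -/
structure IsSingularAt {F : Type*} [Field F] (W : WeierstrassCurve F) (r t : F) : Prop where
  /-- The partial derivative with respect to `y` vanishes. -/
  dy : 2 * t + W.a₁ * r + W.a₃ = 0
  /-- The partial derivative with respect to `x` vanishes. -/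
  dx : W.a₁ * t = 3 * r ^ 2 + 2 * W.a₂ * r + W.a₄
  /-- The point lies on the curve. -/
  eqn : t ^ 2 + W.a₁ * r * t + W.a₃ * t = r ^ 3 + W.a₂ * r ^ 2 + W.a₄ * r + W.a₆

section

variable {F : Type*} [Field F] {W : WeierstrassCurve F}

theorem IsSingularAt.unique {r t r' t' : F} (h : IsSingularAt W r t)
    (hs : IsSingularAt W r' t') : r = r' ∧ t = t' := by
  obtain ⟨h1, h2, h3⟩ := h
  obtain ⟨k1, k2, k3⟩ := hs
  -- After translating `(r', t')` to the origin, the three equations for `(r, t)` force the cube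
  -- of its first coordinate to vanish.
  have hr : (r - r') ^ 3 = 0 := by grind
  have hr0 : r = r' := sub_eq_zero.mp (pow_eq_zero_iff (by norm_num) |>.mp hr)
  subst hr0
  have ht : (t - t') ^ 2 = 0 := by grind
  exact ⟨rfl, sub_eq_zero.mp (pow_eq_zero_iff (by norm_num) |>.mp ht)⟩

theorem IsSingularAt.discr_eq_zero {r t : F} (h : IsSingularAt W r t) : W.Δ = 0 := by
  -- Moving the point to the origin does not change `Δ` and makes `a₃ = a₄ = a₆ = 0`.
  have hΔ := W.variableChange_Δ ⟨1, r, 0, t⟩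
  have h3 : ((⟨1, r, 0, t⟩ : WeierstrassCurve.VariableChange F) • W).a₃ = 0 := by
    rw [WeierstrassCurve.variableChange_a₃]
    simp
    linear_combination h.dy
  have h4 : ((⟨1, r, 0, t⟩ : WeierstrassCurve.VariableChange F) • W).a₄ = 0 := by
    rw [WeierstrassCurve.variableChange_a₄]
    simp
    linear_combination -h.dx
  have h6 : ((⟨1, r, 0, t⟩ : WeierstrassCurve.VariableChange F) • W).a₆ = 0 := by
    rw [WeierstrassCurve.variableChange_a₆]
    simp
    linear_combination -h.eqn
  rw [WeierstrassCurve.Δ, WeierstrassCurve.b₈, WeierstrassCurve.b₄, WeierstrassCurve.b₆,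
    h3, h4, h6] at hΔ
  simpa using hΔ.symm

/-- Away from characteristic 2, completing the square reduces the search for a singular point to
that for a double root of `4x³ + b₂x² + 2b₄x + b₆`. -/
theorem IsSingularAt.of_double_root (h2 : (2 : F) ≠ 0) {r : F}
    (hd : 6 * r ^ 2 + W.b₂ * r + W.b₄ = 0)
    (he : 4 * r ^ 3 + W.b₂ * r ^ 2 + 2 * W.b₄ * r + W.b₆ = 0) :
    IsSingularAt W r (-(W.a₁ * r + W.a₃) / 2) := by
  simp only [WeierstrassCurve.b₂, WeierstrassCurve.b₄, WeierstrassCurve.b₆] at hd he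
  refine ⟨?_, ?_, ?_⟩
  · field_simp
    ring
  · field_simp
    linear_combination -hd
  · field_simp
    linear_combination -he

theorem exists_isSingularAt_of_char_ne_two [Finite F] (h2 : (2 : F) ≠ 0) (hΔ : W.Δ = 0) :
    ∃ r t, IsSingularAt W r t := by
  have hb := W.b_relation
  have hc := W.c_relation
  rw [hΔ] at hc
  have hΔ' := hΔ
  rw [WeierstrassCurve.Δ] at hΔ'
  by_cases h4 : W.c₄ = 0
  · have h6 : W.c₆ = 0 := by
      rw [h4] at hc
      refine pow_eq_zero_iff (two_ne_zero) |>.mp ?_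
      linear_combination hc
    rw [WeierstrassCurve.c₄] at h4
    rw [WeierstrassCurve.c₆] at h6
    by_cases h3 : (3 : F) = 0
    · -- In characteristic 3 the cubic becomes `x³ + b₆`, whose triple root is a cube root.
      have hb2 : W.b₂ = 0 := by
        refine pow_eq_zero_iff (two_ne_zero) |>.mp ?_
        linear_combination h4 + 8 * W.b₄ * h3
      have hb4 : W.b₄ = 0 := by
        refine pow_eq_zero_iff (three_ne_zero) |>.mp ?_
        rw [hb2] at hΔ'
        linear_combination hΔ' + (3 * W.b₄ ^ 3 + 9 * W.b₆ ^ 2) * h3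
      have : CharP F 3 :=
        ringChar.of_eq (CharP.ringChar_of_prime_eq_zero Nat.prime_three (by exact_mod_cast h3))
      obtain ⟨r, hr⟩ := (Finite.injective_iff_surjective.mp (frobenius_inj F 3)) (-W.b₆)
      rw [frobenius_def] at hr
      refine ⟨r, _, IsSingularAt.of_double_root h2 ?_ ?_⟩
      · rw [hb2, hb4]
        linear_combination 2 * r ^ 2 * h3
      · rw [hb2, hb4]
        linear_combination hr + r ^ 3 * h3
    · have h12 : (12 : F) ≠ 0 := by
        have : (12 : F) = 2 * 2 * 3 := by norm_num
        rw [this]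
        exact mul_ne_zero (mul_ne_zero h2 h2) h3
      refine ⟨-W.b₂ / 12, _, IsSingularAt.of_double_root h2 ?_ ?_⟩
      · have : (24 : F) ≠ 0 := by
          have : (24 : F) = 2 * 12 := by norm_num
          rw [this]
          exact mul_ne_zero h2 h12
        refine (mul_eq_zero_iff_left this).mp ?_
        field_simp
        linear_combination -144 * h4
      · have : (216 : F) ≠ 0 := by
          have : (216 : F) = 2 * 3 * 3 * 12 := by norm_num
          rw [this]
          exact mul_ne_zero (mul_ne_zero (mul_ne_zero h2 h3) h3) h12
        refine (mul_eq_zero_iff_left this).mp ?_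
        field_simp
        linear_combination -12 ^ 3 * h6
  · -- A node: the double root is a rational function of the coefficients.
    refine ⟨(18 * W.b₆ - W.b₂ * W.b₄) / W.c₄, _, IsSingularAt.of_double_root h2 ?_ ?_⟩
    · field_simp
      rw [WeierstrassCurve.c₄]
      grind
    · field_simp
      rw [WeierstrassCurve.c₄]
      grind

theorem exists_isSingularAt_of_char_two [Finite F] (h2 : (2 : F) = 0) (hΔ : W.Δ = 0) :
    ∃ r t, IsSingularAt W r t := by
  have : CharP F 2 := CharTwo.of_one_ne_zero_of_two_eq_zero one_ne_zero h2
  rw [W.Δ_of_char_two, W.b₈_of_char_two] at hΔ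
  by_cases h1 : W.a₁ = 0
  · have h3 : W.a₃ = 0 := by
      refine pow_eq_zero_iff (four_ne_zero) |>.mp ?_
      rw [h1] at hΔ
      linear_combination hΔ
    have hsurj := Finite.injective_iff_surjective.mp (frobenius_inj F 2)
    obtain ⟨r, hr⟩ := hsurj W.a₄
    obtain ⟨t, ht⟩ := hsurj (r ^ 3 + W.a₂ * r ^ 2 + W.a₄ * r + W.a₆)
    rw [frobenius_def] at hr ht
    refine ⟨r, t, ?_, ?_, ?_⟩
    · rw [h1, h3]
      linear_combination t * h2
    · rw [h1]
      linear_combination hr - (2 * r ^ 2 + W.a₂ * r) * h2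
    · rw [h1, h3]
      linear_combination ht
  · -- As `a₁ ≠ 0`, the `y`-derivative determines `r` and then the `x`-derivative determines `t`;
    -- the equation at this point, multiplied by `a₁⁶`, becomes `Δ = 0`.
    refine ⟨W.a₃ / W.a₁, (3 * (W.a₃ / W.a₁) ^ 2 + 2 * W.a₂ * (W.a₃ / W.a₁) + W.a₄) / W.a₁,
      ?_, ?_, ?_⟩
    · rw [h2, mul_div_cancel₀ _ h1]
      linear_combination W.a₃ * h2
    · field_simp
    · field_simp
      grind

theorem exists_isSingularAt [Finite F] (hΔ : W.Δ = 0) : ∃ r t, IsSingularAt W r t := by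
  by_cases h2 : (2 : F) = 0
  · exact exists_isSingularAt_of_char_two h2 hΔ
  · exact exists_isSingularAt_of_char_ne_two h2 hΔ

end

theorem card_singular_weierstrass (F : Type*) [Field F] [Fintype F] [DecidableEq F] :
    (Finset.univ.filter (fun v : F × F × F × F × F =>
        (WeierstrassCurve.mk v.1 v.2.1 v.2.2.1 v.2.2.2.1 v.2.2.2.2).Δ = 0)).card =
      Fintype.card F ^ 4 := by
  have hcard : (Finset.univ : Finset (F × F × F × F)).card = Fintype.card F ^ 4 := by
    simp only [Finset.card_univ, Fintype.card_prod]
    ring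
  rw [← hcard]
  symm
  -- The parameter `(a₁, a₂, r, t)` goes to the unique curve with these `a₁`, `a₂` that is singular
  -- at `(r, t)`.
  let f : F × F × F × F → F × F × F × F × F := fun ⟨a₁, a₂, r, t⟩ =>
    ⟨a₁, a₂, -2 * t - a₁ * r, a₁ * t - 3 * r ^ 2 - 2 * a₂ * r,
      t ^ 2 + a₁ * r * t + (-2 * t - a₁ * r) * t - r ^ 3 - a₂ * r ^ 2
        - (a₁ * t - 3 * r ^ 2 - 2 * a₂ * r) * r⟩
  have hf : ∀ p : F × F × F × F, IsSingularAt (WeierstrassCurve.mk (f p).1 (f p).2.1 (f p).2.2.1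
      (f p).2.2.2.1 (f p).2.2.2.2) p.2.2.1 p.2.2.2 := by
    rintro ⟨a₁, a₂, r, t⟩
    constructor <;> simp only [f] <;> ring
  refine Finset.card_bij (fun p _ => f p) ?_ ?_ ?_
  · intro p _
    simpa using (hf p).discr_eq_zero
  · intro p _ p' _ h
    have hp := hf p
    rw [h] at hp
    obtain ⟨hr, ht⟩ := hp.unique (hf p')
    have h1 : p.1 = p'.1 := congrArg (fun v : F × F × F × F × F => v.1) h
    have h2 : p.2.1 = p'.2.1 := congrArg (fun v : F × F × F × F × F => v.2.1) h
    exact Prod.ext h1 (Prod.ext h2 (Prod.ext hr ht))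
  · rintro ⟨a₁, a₂, a₃, a₄, a₆⟩ hv
    obtain ⟨r, t, hy, hx, he⟩ := exists_isSingularAt (Finset.mem_filter.mp hv).2
    simp only at hy hx he
    refine ⟨⟨a₁, a₂, r, t⟩, Finset.mem_univ _, ?_⟩
    have e3 : -2 * t - a₁ * r = a₃ := by linear_combination -hy
    have e4 : a₁ * t - 3 * r ^ 2 - 2 * a₂ * r = a₄ := by linear_combination hx
    simp only [f, e3, e4, Prod.mk.injEq, true_and]
    linear_combination he

/-- The number of Weierstrass equations `y² + a₁xy + a₃y = x³ + a₂x² + a₄x + a₆` over a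
finite field `F` with `q` elements having nonzero discriminant is `q⁵ - q⁴`. -/
theorem card_smooth_weierstrass (F : Type*) [Field F] [Fintype F] [DecidableEq F] :
    (Finset.univ.filter (fun v : F × F × F × F × F =>
        (WeierstrassCurve.mk v.1 v.2.1 v.2.2.1 v.2.2.2.1 v.2.2.2.2).Δ ≠ 0)).card =
      Fintype.card F ^ 5 - Fintype.card F ^ 4 := by
  have htot : Fintype.card (F × F × F × F × F) = Fintype.card F ^ 5 := by
    simp only [Fintype.card_prod]
    ring
  have hadd := Finset.card_filter_add_card_filter_not (s := Finset.univ)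
    (fun v : F × F × F × F × F =>
      (WeierstrassCurve.mk v.1 v.2.1 v.2.2.1 v.2.2.2.1 v.2.2.2.2).Δ = 0)
  rw [card_singular_weierstrass, Finset.card_univ, htot] at hadd
  simp only [ne_eq]
  omega
end

section
/- Let F be a finite field of odd cardinality q. For a tuple (a₁, a₂, a₃, a₄, a₆) ∈ F⁵ with nonzero discriminant, let N denote the number of points of the corresponding Weierstrass curve over F, i.e., the number of affine solutions (x,y) ∈ F² of y² + a₁xy + a₃y = x³ + a₂x² + a₄x + a₆ plus one for the point at infinity. Then for every integer t, the number of tuples (a₁, a₂, a₃, a₄, a₆) ∈ F⁵ with nonzero discriminant and q + 1 - N = t equals the number of such tuples with q + 1 - N = -t. -/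
/-!
The symmetry is realised by quadratic twisting. Fix a nonsquare `d` of `F`. Completing the square
turns a Weierstrass equation into `Y² = 4x³ + b₂x² + 2b₄x + b₆`, so its trace is
`-∑ x, χ (4x³ + b₂x² + 2b₄x + b₆)`, where `χ` is the quadratic character (`trace_eq_neg_sum`).

Since `2` is invertible, the coefficients `a₂, a₄, a₆` can be altered with `a₁, a₃` kept fixed so
that `(b₂, b₄, b₆)` becomes `(d b₂, d² b₄, d³ b₆)` (`twist`). This map is injective on `F⁵`, it
multiplies `Δ` by `d⁶`, and the substitution `x ↦ d x` multiplies the cubic by `d³`, whose character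
is `-1`, so the trace changes sign. Hence the number of equations of trace `t` is at most the number
of trace `-t`; applying this to `-t` as well gives equality.
-/

/-- The number of points of the Weierstrass curve
`y² + a₁xy + a₃y = x³ + a₂x² + a₄x + a₆` over the finite field `F`: the number of affine
solutions `(x, y) ∈ F²` plus one for the point at infinity. -/
def weierstrassPointCount (F : Type*) [Field F] [Fintype F] [DecidableEq F]
    (a₁ a₂ a₃ a₄ a₆ : F) : ℕ :=
  (Finset.univ.filter (fun p : F × F =>
      p.2 ^ 2 + a₁ * p.1 * p.2 + a₃ * p.2 =
        p.1 ^ 3 + a₂ * p.1 ^ 2 + a₄ * p.1 + a₆)).card + 1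

section WeierstrassTwist

variable {F : Type*} [Field F]

/-- The Weierstrass curve whose coefficients are the entries of a tuple `(a₁, a₂, a₃, a₄, a₆)`. -/
def tupleCurve (v : F × F × F × F × F) : WeierstrassCurve F :=
  WeierstrassCurve.mk v.1 v.2.1 v.2.2.1 v.2.2.2.1 v.2.2.2.2

/-- The cubic `4x³ + b₂x² + 2b₄x + b₆` obtained from a Weierstrass equation by completing the
square. -/
def squareCubic (W : WeierstrassCurve F) (x : F) : F :=
  4 * x ^ 3 + W.b₂ * x ^ 2 + 2 * W.b₄ * x + W.b₆

/-- The twist by `d` of a tuple `(a₁, a₂, a₃, a₄, a₆)`, normalised so as to keep `a₁` and `a₃`; the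
other coefficients are determined by `b₂, b₄, b₆` being scaled by `d, d², d³`. It is meaningful when
`2` is invertible. -/
def twist (d : F) (v : F × F × F × F × F) : F × F × F × F × F :=
  (v.1, (d * (v.1 ^ 2 + 4 * v.2.1) - v.1 ^ 2) / 4, v.2.2.1,
    (d ^ 2 * (2 * v.2.2.2.1 + v.1 * v.2.2.1) - v.1 * v.2.2.1) / 2,
    (d ^ 3 * (v.2.2.1 ^ 2 + 4 * v.2.2.2.2) - v.2.2.1 ^ 2) / 4)

lemma four_ne_zero_of_two (h2 : (2 : F) ≠ 0) : (4 : F) ≠ 0 := by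
  have h : (4 : F) = 2 * 2 := by norm_num
  rw [h]
  exact mul_ne_zero h2 h2

lemma twist_b₂ (h2 : (2 : F) ≠ 0) (d : F) (v : F × F × F × F × F) :
    (tupleCurve (twist d v)).b₂ = d * (tupleCurve v).b₂ := by
  have h4 := four_ne_zero_of_two h2
  simp only [tupleCurve, twist, WeierstrassCurve.b₂]
  rw [mul_div_cancel₀ _ h4]
  ring

lemma twist_b₄ (h2 : (2 : F) ≠ 0) (d : F) (v : F × F × F × F × F) :
    (tupleCurve (twist d v)).b₄ = d ^ 2 * (tupleCurve v).b₄ := by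
  simp only [tupleCurve, twist, WeierstrassCurve.b₄]
  rw [mul_div_cancel₀ _ h2]
  ring

lemma twist_b₆ (h2 : (2 : F) ≠ 0) (d : F) (v : F × F × F × F × F) :
    (tupleCurve (twist d v)).b₆ = d ^ 3 * (tupleCurve v).b₆ := by
  have h4 := four_ne_zero_of_two h2
  simp only [tupleCurve, twist, WeierstrassCurve.b₆]
  rw [mul_div_cancel₀ _ h4]
  ring

lemma twist_b₈ (h2 : (2 : F) ≠ 0) (d : F) (v : F × F × F × F × F) :
    (tupleCurve (twist d v)).b₈ = d ^ 4 * (tupleCurve v).b₈ := by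
  apply mul_left_cancel₀ (four_ne_zero_of_two h2)
  rw [WeierstrassCurve.b_relation, twist_b₂ h2, twist_b₄ h2, twist_b₆ h2]
  linear_combination -d ^ 4 * (tupleCurve v).b_relation

lemma twist_Δ (h2 : (2 : F) ≠ 0) (d : F) (v : F × F × F × F × F) :
    (tupleCurve (twist d v)).Δ = d ^ 6 * (tupleCurve v).Δ := by
  simp only [WeierstrassCurve.Δ, twist_b₂ h2, twist_b₄ h2, twist_b₆ h2, twist_b₈ h2]
  ring

lemma twist_squareCubic (h2 : (2 : F) ≠ 0) (d x : F) (v : F × F × F × F × F) :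
    squareCubic (tupleCurve (twist d v)) (d * x) = d ^ 3 * squareCubic (tupleCurve v) x := by
  simp only [squareCubic, twist_b₂ h2, twist_b₄ h2, twist_b₆ h2]
  ring

lemma twist_injective (h2 : (2 : F) ≠ 0) {d : F} (hd : d ≠ 0) :
    Function.Injective (twist d) := by
  have h4 := four_ne_zero_of_two h2
  rintro ⟨a₁, a₂, a₃, a₄, a₆⟩ ⟨c₁, c₂, c₃, c₄, c₆⟩ h
  have hb₂ := twist_b₂ h2 d (a₁, a₂, a₃, a₄, a₆)
  have hb₄ := twist_b₄ h2 d (a₁, a₂, a₃, a₄, a₆)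
  have hb₆ := twist_b₆ h2 d (a₁, a₂, a₃, a₄, a₆)
  rw [h, twist_b₂ h2] at hb₂
  rw [h, twist_b₄ h2] at hb₄
  rw [h, twist_b₆ h2] at hb₆
  replace hb₂ := mul_left_cancel₀ hd hb₂
  replace hb₄ := mul_left_cancel₀ (pow_ne_zero 2 hd) hb₄
  replace hb₆ := mul_left_cancel₀ (pow_ne_zero 3 hd) hb₆
  obtain rfl : a₁ = c₁ := congrArg (fun v => v.1) h
  obtain rfl : a₃ = c₃ := congrArg (fun v => v.2.2.1) h
  simp only [tupleCurve, WeierstrassCurve.b₂, WeierstrassCurve.b₄, WeierstrassCurve.b₆]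
    at hb₂ hb₄ hb₆
  obtain rfl : a₂ = c₂ := mul_left_cancel₀ h4 (by linear_combination -hb₂)
  obtain rfl : a₄ = c₄ := mul_left_cancel₀ h2 (by linear_combination -hb₄)
  obtain rfl : a₆ = c₆ := mul_left_cancel₀ h4 (by linear_combination -hb₆)
  rfl

variable [Fintype F] [DecidableEq F]

/-- The trace of Frobenius `q + 1 - N` of the Weierstrass equation given by a tuple. -/
def tupleTrace (v : F × F × F × F × F) : ℤ :=
  (Fintype.card F : ℤ) + 1 -
    weierstrassPointCount F v.1 v.2.1 v.2.2.1 v.2.2.2.1 v.2.2.2.2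

/-- For fixed `x`, the affine map `y ↦ 2y + a₁x + a₃` sends the points above `x` bijectively to the
square roots of the cubic at `x`. -/
lemma card_fiber (hF : ringChar F ≠ 2) (v : F × F × F × F × F) (x : F) :
    ((Finset.univ.filter (fun y : F => y ^ 2 + v.1 * x * y + v.2.2.1 * y =
      x ^ 3 + v.2.1 * x ^ 2 + v.2.2.2.1 * x + v.2.2.2.2)).card : ℤ) =
      quadraticChar F (squareCubic (tupleCurve v) x) + 1 := by
  have h2 : (2 : F) ≠ 0 := Ring.two_ne_zero hF
  have h4 := four_ne_zero_of_two h2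
  rw [← quadraticChar_card_sqrts hF]
  congr 1
  refine Finset.card_bij (fun y _ => 2 * y + v.1 * x + v.2.2.1) ?_ ?_ ?_
  · intro y hy
    simp only [Finset.mem_filter, Finset.mem_univ, true_and] at hy
    refine Set.mem_toFinset.mpr ?_
    change (2 * y + v.1 * x + v.2.2.1) ^ 2 = squareCubic (tupleCurve v) x
    simp only [squareCubic, tupleCurve,
      WeierstrassCurve.b₂, WeierstrassCurve.b₄, WeierstrassCurve.b₆]
    linear_combination 4 * hy
  · intro y _ z _ h
    exact mul_left_cancel₀ h2 (by linear_combination h)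
  · intro z hz
    have hy : 2 * ((z - v.1 * x - v.2.2.1) / 2) = z - v.1 * x - v.2.2.1 :=
      mul_div_cancel₀ _ h2
    refine ⟨(z - v.1 * x - v.2.2.1) / 2, ?_, by linear_combination hy⟩
    generalize (z - v.1 * x - v.2.2.1) / 2 = y at hy
    obtain rfl : z = 2 * y + v.1 * x + v.2.2.1 := by linear_combination -hy
    replace hz := Set.mem_toFinset.mp hz
    change (2 * y + v.1 * x + v.2.2.1) ^ 2 = squareCubic (tupleCurve v) x at hz
    simp only [squareCubic, tupleCurve,
      WeierstrassCurve.b₂, WeierstrassCurve.b₄, WeierstrassCurve.b₆] at hz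
    simp only [Finset.mem_filter, Finset.mem_univ, true_and]
    exact mul_left_cancel₀ h4 (by linear_combination hz)

lemma trace_eq_neg_sum (hF : ringChar F ≠ 2) (v : F × F × F × F × F) :
    tupleTrace v = -∑ x : F, quadraticChar F (squareCubic (tupleCurve v) x) := by
  have h : (weierstrassPointCount F v.1 v.2.1 v.2.2.1 v.2.2.2.1 v.2.2.2.2 : ℤ) =
      ∑ x : F, (quadraticChar F (squareCubic (tupleCurve v) x) + 1) + 1 := by
    simp only [weierstrassPointCount, ← card_fiber hF, Finset.card_filter,
      Fintype.sum_prod_type]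
    push_cast
    rfl
  rw [tupleTrace, h, Finset.sum_add_distrib]
  simp

lemma twist_trace (hF : ringChar F ≠ 2) {d : F} (hd : ¬IsSquare d)
    (v : F × F × F × F × F) : tupleTrace (twist d v) = -tupleTrace v := by
  have h2 : (2 : F) ≠ 0 := Ring.two_ne_zero hF
  have hd0 : d ≠ 0 := by
    rintro rfl
    exact hd IsSquare.zero
  rw [trace_eq_neg_sum hF, trace_eq_neg_sum hF,
    ← Equiv.sum_comp (Equiv.mulLeft₀ d hd0)
      (fun x => quadraticChar F (squareCubic (tupleCurve (twist d v)) x))]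
  refine congrArg Neg.neg ?_
  rw [← Finset.sum_neg_distrib]
  refine Finset.sum_congr rfl fun x _ => ?_
  rw [Equiv.mulLeft₀_apply, twist_squareCubic h2, map_mul, map_pow,
    quadraticChar_neg_one_iff_not_isSquare.mpr hd]
  ring

lemma card_trace_le (hF : ringChar F ≠ 2) (t : ℤ) :
    (Finset.univ.filter (fun v : F × F × F × F × F =>
      (tupleCurve v).Δ ≠ 0 ∧ tupleTrace v = t)).card ≤
    (Finset.univ.filter (fun v : F × F × F × F × F =>
      (tupleCurve v).Δ ≠ 0 ∧ tupleTrace v = -t)).card := by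
  have h2 : (2 : F) ≠ 0 := Ring.two_ne_zero hF
  obtain ⟨d, hd⟩ := FiniteField.exists_nonsquare hF
  have hd0 : d ≠ 0 := by
    rintro rfl
    exact hd IsSquare.zero
  refine Finset.card_le_card_of_injOn (twist d) ?_ (twist_injective h2 hd0).injOn
  intro v hv
  simp only [Finset.coe_filter, Finset.mem_univ, true_and, Set.mem_ofPred_eq] at hv ⊢
  rw [twist_Δ h2, twist_trace hF hd, hv.2]
  exact ⟨mul_ne_zero (pow_ne_zero 6 hd0) hv.1, rfl⟩

end WeierstrassTwist

/-- Over a finite field of odd cardinality `q`, for each `t ∈ ℤ` the number of Weierstrass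
equations with nonzero discriminant and trace of Frobenius `q + 1 - N = t` equals the
number of those with trace `-t`. -/
theorem weierstrass_trace_symmetry (F : Type*) [Field F] [Fintype F] [DecidableEq F]
    (hq : Odd (Fintype.card F)) (t : ℤ) :
    (Finset.univ.filter (fun v : F × F × F × F × F =>
        (WeierstrassCurve.mk v.1 v.2.1 v.2.2.1 v.2.2.2.1 v.2.2.2.2).Δ ≠ 0 ∧
          (Fintype.card F : ℤ) + 1 -
            weierstrassPointCount F v.1 v.2.1 v.2.2.1 v.2.2.2.1 v.2.2.2.2 = t)).card =
    (Finset.univ.filter (fun v : F × F × F × F × F =>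
        (WeierstrassCurve.mk v.1 v.2.1 v.2.2.1 v.2.2.2.1 v.2.2.2.2).Δ ≠ 0 ∧
          (Fintype.card F : ℤ) + 1 -
            weierstrassPointCount F v.1 v.2.1 v.2.2.1 v.2.2.2.1 v.2.2.2.2 = -t)).card := by
  have hF : ringChar F ≠ 2 := fun h => by
    have := FiniteField.even_card_of_char_two h
    rw [Nat.odd_iff] at hq
    omega
  have hle := card_trace_le hF t
  have hge := card_trace_le hF (-t)
  rw [neg_neg] at hge
  exact le_antisymm hle hge
end

section
/- Let F be a finite field of odd cardinality q and let k ∈ ℕ. For a tuple (a₁, a₂, a₃, a₄, a₆) ∈ F⁵ with nonzero discriminant, let N denote the number of points of the corresponding Weierstrass curve over F, i.e., the number of affine solutions (x,y) ∈ F² of y² + a₁xy + a₃y = x³ + a₂x² + a₄x + a₆ plus one for the point at infinity. Then the sum of (q + 1 - N)^{2k+1} over all tuples (a₁, a₂, a₃, a₄, a₆) ∈ F⁵ with nonzero discriminant equals 0. -/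
/-- The cubic `4x³ + b₂x² + 2b₄x + b₆`, i.e. the discriminant of the Weierstrass equation regarded
as a quadratic equation in `y`. -/
def weierstrassCubic {F : Type*} [Field F] (W : WeierstrassCurve F) (x : F) : F :=
  4 * x ^ 3 + W.b₂ * x ^ 2 + 2 * W.b₄ * x + W.b₆

theorem trace_eq_neg_sum_quadraticChar {F : Type*} [Field F] [Fintype F] [DecidableEq F]
    (hF : ringChar F ≠ 2) (a₁ a₂ a₃ a₄ a₆ : F) :
    (Fintype.card F : ℤ) + 1 - weierstrassPointCount F a₁ a₂ a₃ a₄ a₆ =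
      -∑ x : F, quadraticChar F (weierstrassCubic ⟨a₁, a₂, a₃, a₄, a₆⟩ x) := by
  have h2 : (2 : F) ≠ 0 := Ring.two_ne_zero hF
  have fiber (x : F) : ((Finset.univ.filter (fun y : F =>
      y ^ 2 + a₁ * x * y + a₃ * y = x ^ 3 + a₂ * x ^ 2 + a₄ * x + a₆)).card : ℤ) =
      quadraticChar F (weierstrassCubic ⟨a₁, a₂, a₃, a₄, a₆⟩ x) + 1 := by
    rw [← quadraticChar_card_sqrts hF]
    norm_cast
    refine Finset.card_bij (fun y _ => 2 * y + a₁ * x + a₃) ?_ ?_ ?_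
    · intro y hy
      simp only [Finset.mem_filter, Finset.mem_univ, true_and] at hy
      rw [Set.mem_toFinset, Set.mem_ofPred_eq]
      simp only [weierstrassCubic, WeierstrassCurve.b₂, WeierstrassCurve.b₄, WeierstrassCurve.b₆]
      linear_combination 4 * hy
    · intro y _ z _ h
      exact mul_left_cancel₀ h2 (by linear_combination h)
    · intro z hz
      rw [Set.mem_toFinset, Set.mem_ofPred_eq] at hz
      simp only [weierstrassCubic, WeierstrassCurve.b₂, WeierstrassCurve.b₄,
        WeierstrassCurve.b₆] at hz
      have hy : 2 * ((z - a₁ * x - a₃) / 2) = z - a₁ * x - a₃ := mul_div_cancel₀ _ h2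
      refine ⟨(z - a₁ * x - a₃) / 2, ?_, by linear_combination hy⟩
      generalize (z - a₁ * x - a₃) / 2 = y at hy
      obtain rfl : z = 2 * y + a₁ * x + a₃ := by linear_combination -hy
      simp only [Finset.mem_filter, Finset.mem_univ, true_and]
      exact mul_left_cancel₀ (mul_ne_zero h2 h2) (by linear_combination hz)
  have count : ((Finset.univ.filter (fun p : F × F =>
      p.2 ^ 2 + a₁ * p.1 * p.2 + a₃ * p.2 =
        p.1 ^ 3 + a₂ * p.1 ^ 2 + a₄ * p.1 + a₆)).card : ℤ) =
      ∑ x : F, (quadraticChar F (weierstrassCubic ⟨a₁, a₂, a₃, a₄, a₆⟩ x) + 1) := by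
    simp_rw [← fiber, Finset.card_filter]
    push_cast
    rw [Fintype.sum_prod_type]
  rw [weierstrassPointCount, Nat.cast_add, count, Finset.sum_add_distrib]
  simp

/-- The quadratic twist by `d` on coefficient tuples `(a₁, a₂, a₃, a₄, a₆)`, normalised to fix
`a₁` and `a₃`. -/
def weierstrassTwist {F : Type*} [Field F] (d : F) (v : F × F × F × F × F) : F × F × F × F × F :=
  (v.1, (d * (v.1 ^ 2 + 4 * v.2.1) - v.1 ^ 2) / 4, v.2.2.1,
    (d ^ 2 * (2 * v.2.2.2.1 + v.1 * v.2.2.1) - v.1 * v.2.2.1) / 2,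
    (d ^ 3 * (v.2.2.1 ^ 2 + 4 * v.2.2.2.2) - v.2.2.1 ^ 2) / 4)

/-- The Weierstrass curve with coefficient tuple `(a₁, a₂, a₃, a₄, a₆)`. -/
abbrev curveOfTuple {F : Type*} (v : F × F × F × F × F) : WeierstrassCurve F :=
  WeierstrassCurve.mk v.1 v.2.1 v.2.2.1 v.2.2.2.1 v.2.2.2.2

theorem weierstrassTwist_b₂ {F : Type*} [Field F] (h2 : (2 : F) ≠ 0) (d : F)
    (v : F × F × F × F × F) : (curveOfTuple (weierstrassTwist d v)).b₂ =
    d * (curveOfTuple v).b₂ := by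
  have h4 : (4 : F) ≠ 0 := by convert mul_ne_zero h2 h2 using 1; norm_num
  simp only [weierstrassTwist, WeierstrassCurve.b₂]
  field_simp
  ring

theorem weierstrassTwist_b₄ {F : Type*} [Field F] (h2 : (2 : F) ≠ 0) (d : F)
    (v : F × F × F × F × F) : (curveOfTuple (weierstrassTwist d v)).b₄ =
    d ^ 2 * (curveOfTuple v).b₄ := by
  simp only [weierstrassTwist, WeierstrassCurve.b₄]
  field_simp
  ring

theorem weierstrassTwist_b₆ {F : Type*} [Field F] (h2 : (2 : F) ≠ 0) (d : F)
    (v : F × F × F × F × F) : (curveOfTuple (weierstrassTwist d v)).b₆ =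
    d ^ 3 * (curveOfTuple v).b₆ := by
  have h4 : (4 : F) ≠ 0 := by convert mul_ne_zero h2 h2 using 1; norm_num
  simp only [weierstrassTwist, WeierstrassCurve.b₆]
  field_simp
  ring

theorem weierstrassTwist_Δ {F : Type*} [Field F] (h2 : (2 : F) ≠ 0) (d : F)
    (v : F × F × F × F × F) : (curveOfTuple (weierstrassTwist d v)).Δ =
    d ^ 6 * (curveOfTuple v).Δ := by
  have h4 : (4 : F) ≠ 0 := by convert mul_ne_zero h2 h2 using 1; norm_num
  have h8 : (curveOfTuple (weierstrassTwist d v)).b₈ = d ^ 4 * (curveOfTuple v).b₈ := by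
    apply mul_left_cancel₀ h4
    rw [WeierstrassCurve.b_relation, weierstrassTwist_b₂ h2, weierstrassTwist_b₄ h2,
      weierstrassTwist_b₆ h2]
    linear_combination -d ^ 4 * (curveOfTuple v).b_relation
  rw [WeierstrassCurve.Δ, WeierstrassCurve.Δ, h8, weierstrassTwist_b₂ h2, weierstrassTwist_b₄ h2,
    weierstrassTwist_b₆ h2]
  ring

theorem weierstrassTwist_cubic {F : Type*} [Field F] (h2 : (2 : F) ≠ 0) (d : F)
    (v : F × F × F × F × F) (x : F) :
    weierstrassCubic (curveOfTuple (weierstrassTwist d v)) (d * x) =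
      d ^ 3 * weierstrassCubic (curveOfTuple v) x := by
  rw [weierstrassCubic, weierstrassCubic, weierstrassTwist_b₂ h2, weierstrassTwist_b₄ h2,
    weierstrassTwist_b₆ h2]
  ring

theorem weierstrassTwist_injective {F : Type*} [Field F] (h2 : (2 : F) ≠ 0) {d : F} (hd : d ≠ 0) :
    Function.Injective (weierstrassTwist d) := by
  have h4 : (4 : F) ≠ 0 := by convert mul_ne_zero h2 h2 using 1; norm_num
  intro v w h
  have e₂ := weierstrassTwist_b₂ h2 d v
  have e₄ := weierstrassTwist_b₄ h2 d v
  have e₆ := weierstrassTwist_b₆ h2 d v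
  rw [h] at e₂ e₄ e₆
  rw [weierstrassTwist_b₂ h2] at e₂
  rw [weierstrassTwist_b₄ h2] at e₄
  rw [weierstrassTwist_b₆ h2] at e₆
  replace e₂ := mul_left_cancel₀ hd e₂
  replace e₄ := mul_left_cancel₀ (pow_ne_zero 2 hd) e₄
  replace e₆ := mul_left_cancel₀ (pow_ne_zero 3 hd) e₆
  have h₁ : v.1 = w.1 := congrArg (fun u => u.1) h
  have h₃ : v.2.2.1 = w.2.2.1 := congrArg (fun u => u.2.2.1) h
  simp only [WeierstrassCurve.b₂, WeierstrassCurve.b₄, WeierstrassCurve.b₆, h₁, h₃] at e₂ e₄ e₆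
  refine Prod.ext h₁ (Prod.ext (mul_left_cancel₀ h4 ?_) (Prod.ext h₃
    (Prod.ext (mul_left_cancel₀ h2 ?_) (mul_left_cancel₀ h4 ?_))))
  · linear_combination -e₂
  · linear_combination -e₄
  · linear_combination -e₆

/-- Over a finite field of odd cardinality `q`, the odd moments of the trace of Frobenius
vanish: the sum of `(q + 1 - N)^{2k+1}` over all Weierstrass equations with nonzero
discriminant is zero. -/
theorem weierstrass_odd_moments_vanish (F : Type*) [Field F] [Fintype F] [DecidableEq F]
    (hq : Odd (Fintype.card F)) (k : ℕ) :
    ∑ v ∈ Finset.univ.filter (fun v : F × F × F × F × F =>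
        (WeierstrassCurve.mk v.1 v.2.1 v.2.2.1 v.2.2.2.1 v.2.2.2.2).Δ ≠ 0),
      ((Fintype.card F : ℤ) + 1 -
          weierstrassPointCount F v.1 v.2.1 v.2.2.1 v.2.2.2.1 v.2.2.2.2) ^ (2 * k + 1) =
      0 := by
  have hF : ringChar F ≠ 2 := fun h =>
    (Nat.not_even_iff_odd.mpr hq) (Nat.even_iff.mpr (FiniteField.even_card_iff_char_two.mp h))
  have h2 : (2 : F) ≠ 0 := Ring.two_ne_zero hF
  obtain ⟨d, hd⟩ := FiniteField.exists_nonsquare hF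
  have hd0 : d ≠ 0 := by
    rintro rfl
    exact hd IsSquare.zero
  have hχ : quadraticChar F d = -1 := quadraticChar_neg_one_iff_not_isSquare.mpr hd
  have hbij : Function.Bijective (weierstrassTwist d) :=
    Finite.injective_iff_bijective.mp (weierstrassTwist_injective h2 hd0)
  have trace_twist (v : F × F × F × F × F) :
      ∑ x : F, quadraticChar F (weierstrassCubic (curveOfTuple (weierstrassTwist d v)) x) =
        -∑ x : F, quadraticChar F (weierstrassCubic (curveOfTuple v) x) := by
    rw [← (mulLeft_bijective₀ d hd0).sum_comp, ← Finset.sum_neg_distrib]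
    refine Finset.sum_congr rfl fun x _ => ?_
    rw [weierstrassTwist_cubic h2, map_mul, map_pow, hχ]
    ring
  simp_rw [trace_eq_neg_sum_quadraticChar hF]
  rw [Finset.sum_filter]
  refine self_eq_neg.mp ?_
  conv_lhs => rw [← hbij.sum_comp]
  rw [← Finset.sum_neg_distrib]
  refine Finset.sum_congr rfl fun v _ => ?_
  have hΔ := weierstrassTwist_Δ h2 d v
  have ht := trace_twist v
  simp only [curveOfTuple] at hΔ ht
  simp only [hΔ, ht, ne_eq, mul_eq_zero, pow_eq_zero_iff (n := 6) (by norm_num), hd0, false_or]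
  split_ifs
  · simp
  · rw [Odd.neg_pow ⟨k, rfl⟩]
end
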